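/- Let n−1 < q < p < ∞ and let Φ̃ be a bounded monotone countably additive set function on open subsets of Ω̃ such that for every pair of concentric balls F_r = cl B(y,r), G_r = B(y,2r) ⊂ Ω̃ the inequality (diam φ⁻¹(F_r)/r)^{1/(n−1)} ≤ C (Φ̃(G_r)/|G_r|)^{(p−q)/(pq)} (|φ⁻¹(G_r)|/|G_r|)^{1/(n−1)−1/q} holds. Then at almost every y ∈ Ω̃ the upper limit L(y, φ⁻¹) = limsup_{r→0} max_{|y−z|=r} |φ⁻¹(y) − φ⁻¹(z)|/r is finite, and φ⁻¹ is differentiable almost everywhere in Ω̃. -/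

import Mathlib

open MeasureTheory Metric Set Filter ENNReal

/-! A set function which is superadditive on disjoint open sets and locally bounded has a finite
upper derivative almost everywhere: where `F (B(y, r)) ≥ t |B(y, r)|` for arbitrarily small `r`,
the Besicovitch covering theorem supplies disjoint balls of this kind covering almost all of the
set, whose measure is therefore at most `M / t`. Applied to `Φ̃` and to `U ↦ |φ⁻¹(U)|`, this
bounds the right-hand side of the distortion inequality as `r → 0`, so `φ⁻¹` is pointwise
Lipschitz at almost every point. For `n = 1` the exponent `1 / (n - 1)` degenerates to
`1 / 0 = 0`; there the derivative of `U ↦ |φ⁻¹(U)|` suffices, because the images of balls are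
intervals, whose diameter is controlled by their length.

Pointwise Lipschitz almost everywhere implies differentiable almost everywhere (Stepanov): among
the points where a given Lipschitz estimate holds throughout a fixed neighbourhood, `f` coincides
with both its least Lipschitz majorant and its greatest Lipschitz minorant there, both
differentiable almost everywhere by Rademacher's theorem, and a function squeezed between two
differentiable functions which touch at a point is differentiable at that point. -/

open Asymptotics Module
open scoped Topology NNReal

section SuperadditiveSetFunction

/-- A set function which is superadditive on pairs of disjoint open subsets of `W`: the form of
additivity from which upper derivatives are controlled. -/
def SuperadditiveOnOpens {X : Type*} [TopologicalSpace X] (F : Set X → ℝ≥0∞) (W : Set X) : Prop :=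
  ∀ U V, IsOpen U → IsOpen V → U ⊆ W → V ⊆ W → Disjoint U V → F U + F V ≤ F (U ∪ V)

/-- A set function which is bounded on the open subsets of some neighbourhood of each point of `W`.
The bound ranges over all these subsets because `F` need not be monotone. -/
def LocallyBoundedOnOpens {X : Type*} [TopologicalSpace X] (F : Set X → ℝ≥0∞) (W : Set X) : Prop :=
  ∀ y ∈ W, ∃ M < ∞, ∀ᶠ U in (𝓝 y).smallSets, IsOpen U → F U ≤ M

namespace SuperadditiveOnOpens

variable {X : Type*} [TopologicalSpace X] {F : Set X → ℝ≥0∞} {W : Set X}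

theorem mono (hF : SuperadditiveOnOpens F W) {V : Set X} (hVW : V ⊆ W) :
    SuperadditiveOnOpens F V :=
  fun U₁ U₂ h₁ h₂ hs₁ hs₂ => hF U₁ U₂ h₁ h₂ (hs₁.trans hVW) (hs₂.trans hVW)

theorem sum_le {ι : Type*} (hF : SuperadditiveOnOpens F W) {B : ι → Set X}
    (hopen : ∀ i, IsOpen (B i)) (hsub : ∀ i, B i ⊆ W) (hdisj : Pairwise (Function.onFun Disjoint B))
    (s : Finset ι) : ∑ i ∈ s, F (B i) ≤ F (⋃ i ∈ s, B i) := by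
  classical
  induction s using Finset.induction_on with
  | empty => simp
  | insert a s ha ih =>
    have hd : Disjoint (B a) (⋃ i ∈ s, B i) :=
      disjoint_iUnion₂_right.2 fun i hi => hdisj (ne_of_mem_of_not_mem hi ha).symm
    calc ∑ i ∈ insert a s, F (B i) = F (B a) + ∑ i ∈ s, F (B i) := Finset.sum_insert ha
      _ ≤ F (B a) + F (⋃ i ∈ s, B i) := by gcongr
      _ ≤ F (B a ∪ ⋃ i ∈ s, B i) :=
        hF _ _ (hopen a) (isOpen_biUnion fun i _ => hopen i) (hsub a)
          (iUnion₂_subset fun i _ => hsub i) hd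
      _ = F (⋃ i ∈ insert a s, B i) := by rw [Finset.set_biUnion_insert]

theorem tsum_le {ι : Type*} (hF : SuperadditiveOnOpens F W) {M : ℝ≥0∞}
    (hM : ∀ U ⊆ W, IsOpen U → F U ≤ M) {B : ι → Set X} (hopen : ∀ i, IsOpen (B i))
    (hsub : ∀ i, B i ⊆ W) (hdisj : Pairwise (Function.onFun Disjoint B)) :
    ∑' i, F (B i) ≤ M := by
  rw [ENNReal.tsum_eq_iSup_sum]
  exact iSup_le fun s => (hF.sum_le hopen hsub hdisj s).trans
    (hM _ (iUnion₂_subset fun i _ => hsub i) (isOpen_biUnion fun i _ => hopen i))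

theorem ofReal_of_hasSum {Φ : Set X → ℝ} (hnonneg : ∀ U, IsOpen U → U ⊆ W → 0 ≤ Φ U)
    (hadd : ∀ (U : Set X) (V : ℕ → Set X), IsOpen U → U ⊆ W → (∀ i, IsOpen (V i)) →
      (∀ i, V i ⊆ U) → Pairwise (Function.onFun Disjoint V) →
      HasSum (fun i => Φ (V i)) (Φ (⋃ i, V i))) :
    SuperadditiveOnOpens (fun U => ENNReal.ofReal (Φ U)) W := by
  intro U V hU hV hUW hVW hd
  let S : ℕ → Set X
    | 0 => U
    | 1 => V
    | _ => ∅
  have hSo : ∀ i, IsOpen (S i) := by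
    rintro (- | - | i) <;> simp [S, hU, hV]
  have hSs : ∀ i, S i ⊆ U ∪ V := by
    rintro (- | - | i) <;> simp [S]
  have hSd : Pairwise (Function.onFun Disjoint S) := by
    rintro (- | - | i) (- | - | j) hij <;> simp_all [S, Function.onFun, hd.symm]
  have hSU : ⋃ i, S i = U ∪ V :=
    (iUnion_subset hSs).antisymm (union_subset (subset_iUnion S 0) (subset_iUnion S 1))
  have hUVW : U ∪ V ⊆ W := union_subset hUW hVW
  have hsum : HasSum (fun i => Φ (S i)) (Φ (U ∪ V)) :=
    hSU ▸ hadd (U ∪ V) S (hU.union hV) hUVW hSo hSs hSd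
  have hle : Φ U + Φ V ≤ Φ (U ∪ V) := by
    simpa [Finset.sum_range_succ, S] using
      sum_le_hasSum (Finset.range 2) (fun i _ => hnonneg _ (hSo i) ((hSs i).trans hUVW)) hsum
  rw [← ENNReal.ofReal_add (hnonneg U hU hUW) (hnonneg V hV hVW)]
  exact ENNReal.ofReal_le_ofReal hle

end SuperadditiveOnOpens

section Image

variable {X Y : Type*} [TopologicalSpace X] [TopologicalSpace Y] [MeasurableSpace Y]
  {W : Set X} {f : X → Y}

theorem superadditiveOnOpens_measure_image [OpensMeasurableSpace Y] (ν : Measure Y)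
    (hinj : InjOn f W) (hopen : ∀ U ⊆ W, IsOpen U → IsOpen (f '' U)) :
    SuperadditiveOnOpens (fun U => ν (f '' U)) W := fun U V _ hV hUW hVW hd => by
  dsimp only
  rw [image_union, measure_union (hd.image hinj hUW hVW) (hopen V hVW hV).measurableSet]

theorem locallyBoundedOnOpens_measure_image (ν : Measure Y) [IsLocallyFiniteMeasure ν]
    (hf : ∀ x ∈ W, ContinuousAt f x) : LocallyBoundedOnOpens (fun U => ν (f '' U)) W := by
  intro x hx
  obtain ⟨u, hu, hνu⟩ := ν.finiteAt_nhds (f x)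
  refine ⟨ν u, hνu, (eventually_smallSets_subset.2 ((hf x hx).preimage_mem_nhds hu)).mono
    fun U hU _ => measure_mono (image_subset_iff.2 hU)⟩

end Image

section Differentiation

variable {X : Type*} [MetricSpace X] [SecondCountableTopology X] [HasBesicovitchCovering X]
  [MeasurableSpace X] [OpensMeasurableSpace X] (μ : Measure X) [SFinite μ] {F : Set X → ℝ≥0∞}

theorem SuperadditiveOnOpens.mul_measure_le {U A : Set X} (hF : SuperadditiveOnOpens F U)
    (hU : IsOpen U) {M : ℝ≥0∞} (hM : ∀ V ⊆ U, IsOpen V → F V ≤ M) (hAU : A ⊆ U) {t : ℝ≥0∞}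
    (hA : ∀ y ∈ A, ∃ᶠ r in 𝓝[>] (0 : ℝ), t * μ (closedBall y r) ≤ F (ball y r)) :
    t * μ A ≤ M := by
  have hR : ∀ y ∈ A, ∃ R > 0, ball y R ⊆ U := fun y hy => isOpen_iff.1 hU y (hAU hy)
  choose! R hR₀ hRU using hR
  have hfine : ∀ y ∈ A, ∀ δ > 0,
      ({r | t * μ (closedBall y r) ≤ F (ball y r)} ∩ Ioo 0 δ).Nonempty := fun y hy δ hδ =>
    ((hA y hy).and_eventually (Ioo_mem_nhdsGT hδ)).exists
  obtain ⟨s, r, hs, hsA, hr, hnull, hdisj⟩ := Besicovitch.exists_disjoint_closedBall_covering_ae μ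
    _ A hfine R hR₀
  have hballU : ∀ y : s, ball y.1 (r y) ⊆ U := fun y =>
    (ball_subset_ball (hr y y.2).2.2.le).trans (hRU y (hsA y.2))
  have hballd : Pairwise (Function.onFun Disjoint fun y : s => ball y.1 (r y)) := fun y z hyz =>
    (hdisj y.2 z.2 (Subtype.coe_ne_coe.2 hyz)).mono ball_subset_closedBall ball_subset_closedBall
  calc t * μ A ≤ t * μ (⋃ y ∈ s, closedBall y (r y)) := by
        gcongr 1
        exact measure_mono_ae (ae_le_set.2 hnull)
    _ ≤ t * ∑' y : s, μ (closedBall y.1 (r y)) := by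
        gcongr
        exact measure_biUnion_le μ hs _
    _ = ∑' y : s, t * μ (closedBall y.1 (r y)) := ENNReal.tsum_mul_left.symm
    _ ≤ ∑' y : s, F (ball y.1 (r y)) := ENNReal.tsum_le_tsum fun y => (hr y y.2).1
    _ ≤ M := hF.tsum_le hM (fun _ => isOpen_ball) hballU hballd

theorem SuperadditiveOnOpens.ae_exists_eventually_le_mul_measure_closedBall {W : Set X}
    (hF : SuperadditiveOnOpens F W) (hW : IsOpen W) (hbdd : LocallyBoundedOnOpens F W) :
    ∀ᵐ y ∂μ.restrict W, ∃ k : ℕ, ∀ᶠ r in 𝓝[>] (0 : ℝ),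
      F (ball y r) ≤ k * μ (closedBall y r) := by
  rw [ae_restrict_iff' hW.measurableSet, ae_iff]
  refine measure_null_of_locally_null _ fun y hy => ?_
  obtain ⟨hyW, -⟩ := Classical.not_imp.1 hy
  obtain ⟨M, hM, hMU⟩ := hbdd y hyW
  obtain ⟨V, hV, hVM⟩ := eventually_smallSets.1 hMU
  obtain ⟨ε, hε, hVW⟩ := nhds_basis_ball.mem_iff.1 (inter_mem hV (hW.mem_nhds hyW))
  refine ⟨_, inter_mem_nhdsWithin _ (ball_mem_nhds y hε), ?_⟩
  set A := {z | ¬(z ∈ W → ∃ k : ℕ, ∀ᶠ r in 𝓝[>] (0 : ℝ),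
    F (ball z r) ≤ k * μ (closedBall z r))} ∩ ball y ε
  have hfreq : ∀ k : ℕ, ∀ z ∈ A,
      ∃ᶠ r in 𝓝[>] (0 : ℝ), k * μ (closedBall z r) ≤ F (ball z r) := fun k z hz => by
    obtain ⟨-, hz⟩ := Classical.not_imp.1 hz.1
    exact (not_eventually.1 (not_exists.1 hz k)).mono fun r hr => (not_le.1 hr).le
  have hbound : ∀ k : ℕ, k * μ A ≤ M := fun k =>
    (hF.mono (hVW.trans inter_subset_right)).mul_measure_le μ isOpen_ball
      (fun U hU => hVM U (hU.trans (hVW.trans inter_subset_left))) inter_subset_right (hfreq k)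
  by_contra hne
  obtain ⟨k, hk⟩ := ENNReal.exists_nat_mul_gt hne hM.ne
  exact (hbound k).not_gt hk

end Differentiation

theorem SuperadditiveOnOpens.ae_isBigO_measureReal_ball {E : Type*} [NormedAddCommGroup E]
    [NormedSpace ℝ E] [FiniteDimensional ℝ E] [MeasurableSpace E] [BorelSpace E] (μ : Measure E)
    [μ.IsAddHaarMeasure] {F : Set E → ℝ≥0∞} {W : Set E} (hF : SuperadditiveOnOpens F W)
    (hW : IsOpen W) (hbdd : LocallyBoundedOnOpens F W) :
    ∀ᵐ y ∂μ.restrict W,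
      (fun r => (F (ball y r)).toReal) =O[𝓝[>] (0 : ℝ)] fun r => μ.real (ball y r) := by
  filter_upwards [hF.ae_exists_eventually_le_mul_measure_closedBall μ hW hbdd] with y ⟨k, hk⟩
  refine IsBigO.of_bound k ?_
  filter_upwards [hk, self_mem_nhdsWithin] with r hr (hr₀ : 0 < r)
  have hball : μ (closedBall y r) = μ (ball y r) := by
    rw [μ.addHaar_closedBall y hr₀.le, μ.addHaar_ball_of_pos y hr₀]
  rw [hball] at hr
  rw [Real.norm_of_nonneg toReal_nonneg, Real.norm_of_nonneg measureReal_nonneg]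
  simpa using! toReal_mono (mul_ne_top (natCast_ne_top k) measure_ball_lt_top.ne) hr

end SuperadditiveSetFunction

section Stepanov

theorem exists_lipschitzWith_ge {α : Type*} [PseudoMetricSpace α] {f : α → ℝ} {s : Set α}
    {k : ℝ≥0} {x₀ : α} (hx₀ : x₀ ∈ s) (hf₀ : ∀ z ∈ s, f z ≤ f x₀ + k * dist z x₀) :
    ∃ u : α → ℝ, LipschitzWith k u ∧ (∀ x ∈ s, f x ≤ u x) ∧
      ∀ x ∈ s, (∀ z ∈ s, f z ≤ f x + k * dist z x) → u x = f x := by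
  have : Nonempty s := ⟨⟨x₀, hx₀⟩⟩
  have hbdd : ∀ x, BddAbove (range fun z : s => f z - k * dist z.1 x) := by
    refine fun x => ⟨f x₀ + k * dist x x₀, forall_mem_range.2 fun z => ?_⟩
    calc f z - k * dist z.1 x ≤ f x₀ + k * dist z.1 x₀ - k * dist z.1 x := by
          gcongr
          exact hf₀ z z.2
      _ ≤ f x₀ + k * (dist z.1 x + dist x x₀) - k * dist z.1 x := by
          gcongr
          exact dist_triangle _ _ _
      _ = f x₀ + k * dist x x₀ := by ring
  have hle : ∀ x ∈ s, f x ≤ ⨆ z : s, (f z - k * dist z.1 x) := fun x hx => by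
    simpa using le_ciSup (hbdd x) ⟨x, hx⟩
  refine ⟨fun x => ⨆ z : s, (f z - k * dist z.1 x), ?_, hle, fun x hx hfx => ?_⟩
  · refine LipschitzWith.of_le_add_mul k fun x y => ciSup_le fun z => ?_
    calc f z - k * dist z.1 x = f z - k * (dist z.1 x + dist x y) + k * dist x y := by ring
      _ ≤ f z - k * dist z.1 y + k * dist x y := by
          gcongr
          exact dist_triangle _ _ _
      _ ≤ (⨆ z : s, (f z - k * dist z.1 y)) + k * dist x y := by
          gcongr
          exact le_ciSup (hbdd y) z
  · exact le_antisymm (ciSup_le fun z => sub_le_iff_le_add.2 (hfx z z.2)) (hle x hx)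

theorem differentiableAt_of_le_of_le {E : Type*} [NormedAddCommGroup E] [NormedSpace ℝ E]
    {f u v : E → ℝ} {x : E} (hv : DifferentiableAt ℝ v x) (hu : DifferentiableAt ℝ u x)
    (hvf : ∀ᶠ z in 𝓝 x, v z ≤ f z) (hfu : ∀ᶠ z in 𝓝 x, f z ≤ u z)
    (hvx : v x = f x) (hux : u x = f x) : DifferentiableAt ℝ f x := by
  have hmin : IsLocalMin (u - v) x := by
    filter_upwards [hvf, hfu] with z h₁ h₂
    simpa [hux, hvx] using h₁.trans h₂
  have hderiv : fderiv ℝ u x = fderiv ℝ v x :=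
    sub_eq_zero.1 ((fderiv_sub hu hv).symm.trans hmin.fderiv_eq_zero)
  have hu' := isLittleO_iff.1 (hasFDerivAt_iff_isLittleO.1 hu.hasFDerivAt)
  have hv' := isLittleO_iff.1 (hasFDerivAt_iff_isLittleO.1 hv.hasFDerivAt)
  rw [← hderiv] at hv'
  refine (hasFDerivAt_iff_isLittleO.2 (isLittleO_iff.2 fun c hc => ?_)).differentiableAt
    (f' := fderiv ℝ u x)
  filter_upwards [hu' hc, hv' hc, hvf, hfu] with z hzu hzv hvz huz
  rw [Real.norm_eq_abs, abs_le] at hzu hzv ⊢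
  constructor <;> linarith

variable {E : Type*} [NormedAddCommGroup E] [NormedSpace ℝ E] [FiniteDimensional ℝ E]
  [MeasurableSpace E] [BorelSpace E] (μ : Measure E) [μ.IsAddHaarMeasure]

theorem ae_differentiableAt_of_forall_abs_sub_le (f : E → ℝ) (s : Set E) (k : ℝ≥0) :
    ∀ᵐ x ∂μ, s ∈ 𝓝 x → (∀ z ∈ s, |f z - f x| ≤ k * dist z x) → DifferentiableAt ℝ f x := by
  have hupper {x : E} (hx : ∀ z ∈ s, |f z - f x| ≤ k * dist z x) :
      ∀ z ∈ s, f z ≤ f x + k * dist z x := fun z hz => by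
    linarith [(abs_le.1 (hx z hz)).2]
  have hlower {x : E} (hx : ∀ z ∈ s, |f z - f x| ≤ k * dist z x) :
      ∀ z ∈ s, -f z ≤ -f x + k * dist z x := fun z hz => by
    linarith [(abs_le.1 (hx z hz)).1]
  by_cases h : ∃ x₀ ∈ s, ∀ z ∈ s, |f z - f x₀| ≤ k * dist z x₀
  · obtain ⟨x₀, hx₀, hf₀⟩ := h
    obtain ⟨u, hu, hfu, hu_eq⟩ := exists_lipschitzWith_ge hx₀ (hupper hf₀)
    obtain ⟨v, hv, hfv, hv_eq⟩ := exists_lipschitzWith_ge (f := -f) hx₀ (hlower hf₀)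
    filter_upwards [hu.ae_differentiableAt (μ := μ), hv.ae_differentiableAt (μ := μ)]
      with x hux hvx hs hx
    have hxs : x ∈ s := mem_of_mem_nhds hs
    exact differentiableAt_of_le_of_le hvx.neg hux
      (mem_of_superset hs fun z hz => neg_le.1 (hfv z hz)) (mem_of_superset hs hfu)
      (neg_eq_iff_eq_neg.2 (hv_eq x hxs (hlower hx))) (hu_eq x hxs (hupper hx))
  · exact .of_forall fun x hs hx => absurd ⟨x, mem_of_mem_nhds hs, hx⟩ h

theorem ae_differentiableAt_of_isBigO_real (f : E → ℝ) :
    ∀ᵐ x ∂μ, ((fun z => f z - f x) =O[𝓝 x] fun z => z - x) → DifferentiableAt ℝ f x := by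
  have : Countable (TopologicalSpace.countableBasis E) :=
    (TopologicalSpace.countable_countableBasis E).to_subtype
  have hall : ∀ᵐ x ∂μ, ∀ (s : TopologicalSpace.countableBasis E) (k : ℕ), s.1 ∈ 𝓝 x →
      (∀ z ∈ s.1, |f z - f x| ≤ k * dist z x) → DifferentiableAt ℝ f x :=
    ae_all_iff.2 fun s => ae_all_iff.2 fun k => ae_differentiableAt_of_forall_abs_sub_le μ f s.1 k
  filter_upwards [hall] with x hx hO
  obtain ⟨c, hc⟩ := hO.bound
  obtain ⟨k, hk⟩ := exists_nat_ge c
  have hbasis := TopologicalSpace.isBasis_countableBasis E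
  obtain ⟨s, hs, hxs, hsub⟩ := hbasis.mem_nhds_iff.1 hc
  refine hx ⟨s, hs⟩ k (hbasis.mem_nhds hs hxs) fun z hz => ?_
  calc |f z - f x| ≤ c * ‖z - x‖ := hsub hz
    _ ≤ k * dist z x := by rw [dist_eq_norm]; gcongr

theorem ae_differentiableAt_of_isBigO {F : Type*} [NormedAddCommGroup F] [NormedSpace ℝ F]
    [FiniteDimensional ℝ F] (f : E → F) :
    ∀ᵐ x ∂μ, ((fun z => f z - f x) =O[𝓝 x] fun z => z - x) → DifferentiableAt ℝ f x := by
  let coord (i) : F →L[ℝ] ℝ := (EuclideanSpace.proj i).comp toEuclidean.toContinuousLinearMap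
  filter_upwards [ae_all_iff.2 fun i => ae_differentiableAt_of_isBigO_real μ (coord i ∘ f)]
    with x hx hO
  rw [← toEuclidean.comp_differentiableAt_iff, differentiableAt_euclidean]
  refine fun i => hx i (IsBigO.trans ?_ hO)
  simpa only [map_sub] using! (coord i).isBigO_comp (fun z => f z - f x) (𝓝 x)

end Stepanov

section Distortion

/-- The upper Lipschitz constant `L(y, f) = limsup_{r → 0} max_{|y - z| = r} |f y - f z| / r`,
which is `∞` where the difference quotients are unbounded. -/
noncomputable def upperLipschitzConstant {X Y : Type*} [PseudoMetricSpace X]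
    [PseudoEMetricSpace Y] (f : X → Y) (y : X) : ℝ≥0∞ :=
  limsup (fun r : ℝ => ⨆ z ∈ sphere y r, edist (f y) (f z) / ENNReal.ofReal r) (𝓝[>] 0)

theorem isBigO_one_of_rpow_le_mul_rpow {ι : Type*} {l : Filter ι} {f g h : ι → ℝ} {a b c C : ℝ}
    (ha : 0 < a) (hb : 0 ≤ b) (hc : 0 ≤ c) (hf : ∀ᶠ i in l, 0 ≤ f i)
    (hg : g =O[l] fun _ => (1 : ℝ)) (hh : h =O[l] fun _ => (1 : ℝ))
    (hle : ∀ᶠ i in l, f i ^ a ≤ C * g i ^ b * h i ^ c) : f =O[l] fun _ => (1 : ℝ) := by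
  have hone : ∀ᶠ _ in l, (0 : ℝ) ≤ 1 := .of_forall fun _ => zero_le_one
  have hrhs : (fun i => C * g i ^ b * h i ^ c) =O[l] fun _ => (1 : ℝ) := by
    simpa only [Real.one_rpow, mul_one] using!
      ((hg.rpow hb hone).const_mul_left C).mul (hh.rpow hc hone)
  have hpow : (fun i => f i ^ a) =O[l] fun _ => (1 : ℝ) := by
    refine (IsBigO.of_bound' ?_).trans hrhs
    filter_upwards [hf, hle] with i hfi hi
    rw [Real.norm_of_nonneg (Real.rpow_nonneg hfi a)]
    exact hi.trans (Real.le_norm_self _)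
  have hroot : (fun i => (f i ^ a) ^ a⁻¹) =O[l] fun _ => (1 : ℝ) := by
    simpa only [Real.one_rpow] using! hpow.rpow (inv_nonneg.2 ha.le) hone
  exact hroot.congr' (hf.mono fun i hfi => Real.rpow_rpow_inv hfi ha.ne') .rfl

theorem tendsto_mul_left_nhdsGT_zero {c : ℝ} (hc : 0 < c) :
    Tendsto (fun r => c * r) (𝓝[>] 0) (𝓝[>] 0) :=
  tendsto_iff_comap.2 (comap_mulLeft_nhdsGT_zero hc).ge

section PointwiseLipschitz

variable {E F : Type*} [NormedAddCommGroup E] [NormedAddCommGroup F] {f : E → F} {y : E}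

theorem isBigO_sub_of_isBigO_diam_image_closedBall (hf : ContinuousAt f y)
    (hdiam : (fun r => diam (f '' closedBall y r)) =O[𝓝[>] (0 : ℝ)] fun r => r) :
    (fun z => f z - f y) =O[𝓝 y] fun z => z - y := by
  obtain ⟨K, hK⟩ := hdiam.bound
  have hbdd : ∀ᶠ r in 𝓝[>] (0 : ℝ), Bornology.IsBounded (f '' closedBall y r) := by
    have hball : f ⁻¹' ball (f y) 1 ∈ 𝓝 y := hf.preimage_mem_nhds (ball_mem_nhds _ one_pos)
    filter_upwards [(eventually_closedBall_subset hball).filter_mono nhdsWithin_le_nhds] with r hr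
    exact isBounded_ball.subset (image_subset_iff.2 hr)
  have hlip := (tendsto_norm_sub_self_nhdsNE y).eventually (hK.and hbdd)
  refine IsBigO.of_bound K ?_
  filter_upwards [eventually_nhdsWithin_iff.1 hlip] with z hz
  rcases eq_or_ne z y with rfl | hne
  · simp
  obtain ⟨hzK, hzb⟩ := hz hne
  rw [Real.norm_of_nonneg diam_nonneg, norm_norm] at hzK
  calc ‖f z - f y‖ = dist (f z) (f y) := (dist_eq_norm _ _).symm
    _ ≤ diam (f '' closedBall y ‖z - y‖) := dist_le_diam_of_mem hzb
        (mem_image_of_mem f (mem_closedBall_iff_norm.2 le_rfl))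
        (mem_image_of_mem f (mem_closedBall_self (norm_nonneg _)))
    _ ≤ K * ‖z - y‖ := hzK

theorem upperLipschitzConstant_lt_top_of_isBigO
    (h : (fun z => f z - f y) =O[𝓝 y] fun z => z - y) : upperLipschitzConstant f y < ∞ := by
  obtain ⟨K, hK⟩ := h.bound
  refine (limsup_le_of_le (a := ENNReal.ofReal K) (by isBoundedDefault) ?_).trans_lt ofReal_lt_top
  filter_upwards [(eventually_closedBall_subset hK).filter_mono nhdsWithin_le_nhds,
    self_mem_nhdsWithin] with r hr (hr₀ : 0 < r)
  refine iSup₂_le fun z hz => ENNReal.div_le_of_le_mul ?_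
  rw [edist_comm, edist_dist, ← ENNReal.ofReal_mul' hr₀.le, dist_eq_norm]
  refine ENNReal.ofReal_le_ofReal ?_
  rw [← mem_sphere_iff_norm.1 hz]
  exact hr (sphere_subset_closedBall hz)

end PointwiseLipschitz

theorem ae_isBigO_sub_of_diam_rpow_le {E F : Type*} [NormedAddCommGroup E] [NormedSpace ℝ E]
    [FiniteDimensional ℝ E] [MeasurableSpace E] [BorelSpace E] [NormedAddCommGroup F]
    [MeasurableSpace F] [BorelSpace F] (μ : Measure E) [μ.IsAddHaarMeasure] (ν : Measure F)
    [IsLocallyFiniteMeasure ν] {W : Set E} {f : E → F} (hW : IsOpen W)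
    (hf : ContinuousOn f W) (hinj : InjOn f W) (hopen : ∀ U ⊆ W, IsOpen U → IsOpen (f '' U))
    {Φ : Set E → ℝ≥0∞} (hΦ : SuperadditiveOnOpens Φ W) (hbdd : LocallyBoundedOnOpens Φ W)
    {a b c C : ℝ} (ha : 0 < a) (hb : 0 ≤ b) (hc : 0 ≤ c)
    (hdiam : ∀ y ∈ W, ∀ᶠ r in 𝓝[>] (0 : ℝ), (diam (f '' closedBall y r) / r) ^ a ≤
      C * ((Φ (ball y (2 * r))).toReal / μ.real (ball y (2 * r))) ^ b *
        (ν.real (f '' ball y (2 * r)) / μ.real (ball y (2 * r))) ^ c) :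
    ∀ᵐ y ∂μ.restrict W, (fun z => f z - f y) =O[𝓝 y] fun z => z - y := by
  have hcont : ∀ y ∈ W, ContinuousAt f y := fun y hy => hf.continuousAt (hW.mem_nhds hy)
  filter_upwards [ae_restrict_mem hW.measurableSet, hΦ.ae_isBigO_measureReal_ball μ hW hbdd,
    (superadditiveOnOpens_measure_image ν hinj hopen).ae_isBigO_measureReal_ball μ hW
      (locallyBoundedOnOpens_measure_image ν hcont)] with y hy hΦy hνy
  have htwo := tendsto_mul_left_nhdsGT_zero (two_pos (α := ℝ))
  have hquot : (fun r => diam (f '' closedBall y r) / r) =O[𝓝[>] 0] fun _ => (1 : ℝ) := by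
    refine isBigO_one_of_rpow_le_mul_rpow ha hb hc ?_
      ((div_isBoundedUnder_of_isBigO (hΦy.comp_tendsto htwo)).isBigO_one ℝ)
      ((div_isBoundedUnder_of_isBigO (hνy.comp_tendsto htwo)).isBigO_one ℝ) (hdiam y hy)
    filter_upwards [self_mem_nhdsWithin] with r (hr : 0 < r)
    exact div_nonneg diam_nonneg hr.le
  refine isBigO_sub_of_isBigO_diam_image_closedBall (hcont y hy) ?_
  refine (hquot.mul (isBigO_refl (fun r : ℝ => r) _)).congr' ?_ (.of_forall fun r => one_mul r)
  filter_upwards [self_mem_nhdsWithin] with r (hr : 0 < r)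
  exact div_mul_cancel₀ _ hr.ne'

end Distortion

section DimensionOne

variable {F : Type*} [NormedAddCommGroup F] [NormedSpace ℝ F]

theorem convex_of_isPreconnected_of_finrank_eq_one (hF : finrank ℝ F = 1) {U : Set F}
    (hU : IsPreconnected U) : Convex ℝ U := by
  have : FiniteDimensional ℝ F := .of_finrank_eq_succ hF
  let e : F ≃L[ℝ] ℝ := ContinuousLinearEquiv.ofFinrankEq (hF.trans (finrank_self ℝ).symm)
  have hconv : Convex ℝ (e '' U) :=
    Real.convex_iff_isPreconnected.2 (hU.image e e.continuous.continuousOn)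
  simpa [preimage_image_eq _ e.injective] using! hconv.linear_preimage e.toLinearEquiv.toLinearMap

theorem ball_midpoint_subset_segment_of_finrank_eq_one (hF : finrank ℝ F = 1) (a b : F) :
    ball (midpoint ℝ a b) (dist a b / 2) ⊆ segment ℝ a b := by
  intro z hz
  rw [mem_ball_iff_norm, dist_comm, dist_eq_norm] at hz
  have hab : 0 < ‖b - a‖ := by linarith [norm_nonneg (z - midpoint ℝ a b)]
  obtain ⟨t, ht⟩ := (finrank_eq_one_iff_of_nonzero' _ (norm_pos_iff.1 hab)).1 hF
    (z - midpoint ℝ a b)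
  have ht_lt : |t| < 1 / 2 := by
    rw [← ht, norm_smul, Real.norm_eq_abs] at hz
    nlinarith
  rw [segment_eq_image_lineMap]
  refine ⟨1 / 2 + t, ⟨by linarith [neg_abs_le t], by linarith [le_abs_self t]⟩, ?_⟩
  calc AffineMap.lineMap a b (1 / 2 + t) = t • (b - a) + midpoint ℝ a b := by
        rw [AffineMap.lineMap_apply_module, midpoint_eq_smul_add, invOf_eq_inv]
        module
    _ = z := by rw [ht, sub_add_cancel]

theorem ediam_le_of_isPreconnected_of_finrank_eq_one [MeasurableSpace F] [BorelSpace F]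
    (ν : Measure F) [ν.IsAddHaarMeasure] (hF : finrank ℝ F = 1) {U : Set F}
    (hU : IsPreconnected U) : ediam U ≤ 2 * ν U / ν (ball 0 1) := by
  have : FiniteDimensional ℝ F := .of_finrank_eq_succ hF
  have hball : ν (ball (0 : F) 1) ≠ 0 := (measure_ball_pos ν 0 one_pos).ne'
  refine ediam_le fun a ha b hb => ?_
  rw [ENNReal.le_div_iff_mul_le (.inl hball) (.inl measure_ball_lt_top.ne)]
  rcases eq_or_ne a b with rfl | hab
  · simp
  have hsub : ball (midpoint ℝ a b) (dist a b / 2) ⊆ U :=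
    (ball_midpoint_subset_segment_of_finrank_eq_one hF a b).trans
      ((convex_of_isPreconnected_of_finrank_eq_one hF hU).segment_subset ha hb)
  calc edist a b * ν (ball 0 1)
      = 2 * (ENNReal.ofReal (dist a b / 2) * ν (ball 0 1)) := by
        rw [ENNReal.ofReal_div_of_pos two_pos, edist_dist, ENNReal.ofReal_ofNat, ← mul_assoc,
          ENNReal.mul_div_cancel two_ne_zero ofNat_ne_top]
    _ = 2 * ν (ball (midpoint ℝ a b) (dist a b / 2)) := by
        rw [ν.addHaar_ball_of_pos _ (half_pos (dist_pos.2 hab)), hF, pow_one]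
    _ ≤ 2 * ν U := by gcongr

theorem isBigO_diam_image_closedBall_of_finrank_eq_one {E : Type*} [NormedAddCommGroup E]
    [NormedSpace ℝ E] [FiniteDimensional ℝ E] [MeasurableSpace F] [BorelSpace F] (ν : Measure F)
    [ν.IsAddHaarMeasure] (hF : finrank ℝ F = 1) {W : Set E} {f : E → F} {y : E} (hW : W ∈ 𝓝 y)
    (hf : ContinuousOn f W) :
    (fun r => diam (f '' closedBall y r)) =O[𝓝[>] (0 : ℝ)]
      fun r => ν.real (f '' ball y (2 * r)) := by
  have : FiniteDimensional ℝ F := .of_finrank_eq_succ hF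
  have hsmall : ∀ᶠ r in 𝓝[>] (0 : ℝ), closedBall y r ⊆ W :=
    (eventually_closedBall_subset hW).filter_mono nhdsWithin_le_nhds
  refine IsBigO.of_bound (2 / ν.real (ball 0 1)) ?_
  filter_upwards [self_mem_nhdsWithin, (tendsto_mul_left_nhdsGT_zero two_pos).eventually hsmall]
    with r (hr : 0 < r) hrW
  have hcompact : IsCompact (f '' closedBall y (2 * r)) :=
    (isCompact_closedBall y (2 * r)).image_of_continuousOn (hf.mono hrW)
  have hball : f '' ball y (2 * r) ⊆ f '' closedBall y (2 * r) := image_mono ball_subset_closedBall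
  have hfin : ν (f '' ball y (2 * r)) ≠ ∞ := measure_ne_top_of_subset hball hcompact.measure_ne_top
  have hconn : IsPreconnected (f '' ball y (2 * r)) :=
    (convex_ball y _).isPreconnected.image f (hf.mono (ball_subset_closedBall.trans hrW))
  rw [Real.norm_of_nonneg diam_nonneg, Real.norm_of_nonneg measureReal_nonneg]
  calc diam (f '' closedBall y r) ≤ diam (f '' ball y (2 * r)) :=
        diam_mono (image_mono (closedBall_subset_ball (by linarith)))
          (hcompact.isBounded.subset hball)
    _ ≤ (2 * ν (f '' ball y (2 * r)) / ν (ball 0 1)).toReal :=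
        toReal_mono (div_ne_top (mul_ne_top ofNat_ne_top hfin) (measure_ball_pos ν 0 one_pos).ne')
          (ediam_le_of_isPreconnected_of_finrank_eq_one ν hF hconn)
    _ = 2 / ν.real (ball 0 1) * ν.real (f '' ball y (2 * r)) := by
        simp only [toReal_div, toReal_mul, toReal_ofNat, measureReal_def, div_mul_eq_mul_div]

theorem ae_isBigO_sub_of_finrank_eq_one {E : Type*} [NormedAddCommGroup E] [NormedSpace ℝ E]
    [MeasurableSpace E] [BorelSpace E] (μ : Measure E) [μ.IsAddHaarMeasure]
    (hE : finrank ℝ E = 1) (hF : finrank ℝ F = 1) {W : Set E} {f : E → F} (hW : IsOpen W)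
    (hf : ContinuousOn f W) (hinj : InjOn f W)
    (hopen : ∀ U ⊆ W, IsOpen U → IsOpen (f '' U)) :
    ∀ᵐ y ∂μ.restrict W, (fun z => f z - f y) =O[𝓝 y] fun z => z - y := by
  have : FiniteDimensional ℝ E := .of_finrank_eq_succ hE
  have : FiniteDimensional ℝ F := .of_finrank_eq_succ hF
  borelize F
  let ν : Measure F := Measure.addHaar
  have hcont : ∀ y ∈ W, ContinuousAt f y := fun y hy => hf.continuousAt (hW.mem_nhds hy)
  have hball (y : E) : (fun r => μ.real (ball y (2 * r))) =O[𝓝[>] (0 : ℝ)] fun r => r := by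
    refine IsBigO.congr' (isBigO_const_mul_self (2 * μ.real (ball 0 1)) (fun r => r) _) ?_ .rfl
    filter_upwards [self_mem_nhdsWithin] with r (hr : 0 < r)
    have h2r : 0 < 2 * r := by positivity
    rw [measureReal_def, measureReal_def, μ.addHaar_ball_of_pos y h2r, hE, pow_one, toReal_mul,
      toReal_ofReal h2r.le]
    ring
  filter_upwards [ae_restrict_mem hW.measurableSet,
    (superadditiveOnOpens_measure_image ν hinj hopen).ae_isBigO_measureReal_ball μ hW
      (locallyBoundedOnOpens_measure_image ν hcont)] with y hy hνy
  refine isBigO_sub_of_isBigO_diam_image_closedBall (hcont y hy) ?_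
  calc (fun r => diam (f '' closedBall y r))
      =O[𝓝[>] (0 : ℝ)] fun r => ν.real (f '' ball y (2 * r)) :=
        isBigO_diam_image_closedBall_of_finrank_eq_one ν hF (hW.mem_nhds hy) hf
    _ =O[𝓝[>] (0 : ℝ)] fun r => μ.real (ball y (2 * r)) :=
        hνy.comp_tendsto (tendsto_mul_left_nhdsGT_zero two_pos)
    _ =O[𝓝[>] (0 : ℝ)] fun r => r := hball y

end DimensionOne

theorem isOpen_image_of_leftInvOn {X Y : Type*} [TopologicalSpace X] [TopologicalSpace Y]
    {g : Y → X} {f : X → Y} {s : Set Y} {W U : Set X} (hg : ContinuousOn g s) (hs : IsOpen s)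
    (hmaps : MapsTo f W s) (hgf : LeftInvOn g f W) (hfg : LeftInvOn f g s) (hU : IsOpen U)
    (hUW : U ⊆ W) : IsOpen (f '' U) := by
  have himage : f '' U = s ∩ g ⁻¹' U := by
    refine Subset.antisymm (image_subset_iff.2 fun x hx => ⟨hmaps (hUW hx), ?_⟩)
      fun y hy => ⟨g y, hy.2, hfg hy.1⟩
    rwa [mem_preimage, hgf (hUW hx)]
  exact himage ▸ hg.isOpen_inter_preimage hs hU

theorem stmt_17_general {E F : Type*} [NormedAddCommGroup E] [NormedSpace ℝ E]
    [FiniteDimensional ℝ E] [MeasurableSpace E] [BorelSpace E] [NormedAddCommGroup F]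
    [NormedSpace ℝ F] [FiniteDimensional ℝ F] [MeasurableSpace F] [BorelSpace F]
    (μ : Measure E) [μ.IsAddHaarMeasure] (ν : Measure F) [IsLocallyFiniteMeasure ν] {n : ℕ}
    (hE : finrank ℝ E = n) (hF : finrank ℝ F = n) {p q C : ℝ} (hq : (n : ℝ) - 1 ≤ q) (hqp : q ≤ p)
    {W : Set E} {ψ : E → F} (hW : IsOpen W) (hψ : ContinuousOn ψ W) (hinj : InjOn ψ W)
    (hopen : ∀ U ⊆ W, IsOpen U → IsOpen (ψ '' U)) {Φ : Set E → ℝ≥0∞}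
    (hΦ : SuperadditiveOnOpens Φ W) (hbdd : LocallyBoundedOnOpens Φ W)
    (hdiam : ∀ y ∈ W, ∀ᶠ r in 𝓝[>] (0 : ℝ),
      (diam (ψ '' closedBall y r) / r) ^ (1 / ((n : ℝ) - 1)) ≤
        C * ((Φ (ball y (2 * r))).toReal / μ.real (ball y (2 * r))) ^ ((p - q) / (p * q)) *
          (ν.real (ψ '' ball y (2 * r)) / μ.real (ball y (2 * r))) ^ (1 / ((n : ℝ) - 1) - 1 / q)) :
    (∀ᵐ y ∂μ.restrict W, upperLipschitzConstant ψ y < ∞) ∧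
      ∀ᵐ y ∂μ.restrict W, DifferentiableAt ℝ ψ y := by
  have hlip : ∀ᵐ y ∂μ.restrict W, (fun z => ψ z - ψ y) =O[𝓝 y] fun z => z - y := by
    obtain rfl | rfl | hn : n = 0 ∨ n = 1 ∨ 2 ≤ n := by omega
    · have : Subsingleton F := finrank_zero_iff.1 hF
      exact .of_forall fun y => (isBigO_zero _ _).congr_left fun z => Subsingleton.elim _ _
    · exact ae_isBigO_sub_of_finrank_eq_one μ hE hF hW hψ hinj hopen
    have hn₁ : 0 < (n : ℝ) - 1 := sub_pos.2 (by exact_mod_cast hn)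
    have hq₀ : 0 < q := hn₁.trans_le hq
    have hp₀ : 0 < p := hq₀.trans_le hqp
    exact ae_isBigO_sub_of_diam_rpow_le μ ν hW hψ hinj hopen hΦ hbdd (one_div_pos.2 hn₁)
      (div_nonneg (sub_nonneg.2 hqp) (by positivity))
      (sub_nonneg.2 (one_div_le_one_div_of_le hn₁ hq)) hdiam
  refine ⟨hlip.mono fun y => upperLipschitzConstant_lt_top_of_isBigO, ?_⟩
  filter_upwards [hlip, ae_restrict_of_ae (ae_differentiableAt_of_isBigO μ ψ)] with y hy hdiff
  exact hdiff hy

/-- If a bounded monotone countably additive set function controls the relative diameter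
distortion of concentric balls, then the upper Lipschitz constant
`L(y,φ⁻¹) = limsup_{r→0} max_{|y-z|=r} |φ⁻¹(y)-φ⁻¹(z)|/r` is finite a.e., and the inverse
mapping `φ⁻¹` is differentiable almost everywhere in `Ω̃`. -/
theorem stmt_17 (n : ℕ) (p q C : ℝ) (hq : (n : ℝ) - 1 < q) (hqp : q < p) (hC : 0 ≤ C)
    (Ω Ω' : Set (EuclideanSpace ℝ (Fin n)))
    (hΩ : IsOpen Ω) (hΩc : IsConnected Ω) (hΩ' : IsOpen Ω') (hΩ'c : IsConnected Ω')
    (φ ψ : EuclideanSpace ℝ (Fin n) → EuclideanSpace ℝ (Fin n))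
    (hφ : ContinuousOn φ Ω) (hψ : ContinuousOn ψ Ω')
    (hmaps : Set.MapsTo φ Ω Ω') (hmaps' : Set.MapsTo ψ Ω' Ω)
    (hli : ∀ x ∈ Ω, ψ (φ x) = x) (hri : ∀ y ∈ Ω', φ (ψ y) = y)
    (Φ : Set (EuclideanSpace ℝ (Fin n)) → ℝ) (M : ℝ)
    (hnonneg : ∀ U, IsOpen U → U ⊆ Ω' → 0 ≤ Φ U)
    (hbounded : ∀ U, IsOpen U → U ⊆ Ω' → Φ U ≤ M)
    (hmono : ∀ U₁ U₂, IsOpen U₁ → IsOpen U₂ → U₁ ⊆ U₂ → U₂ ⊆ Ω' → Φ U₁ ≤ Φ U₂)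
    (hadd : ∀ (U : Set (EuclideanSpace ℝ (Fin n))) (V : ℕ → Set (EuclideanSpace ℝ (Fin n))),
      IsOpen U → U ⊆ Ω' → (∀ i, IsOpen (V i)) → (∀ i, V i ⊆ U) →
      Pairwise (Function.onFun Disjoint V) →
      HasSum (fun i => Φ (V i)) (Φ (⋃ i, V i)))
    (hdiam : ∀ (y : EuclideanSpace ℝ (Fin n)) (r : ℝ), 0 < r →
      Metric.ball y (2 * r) ⊆ Ω' →
      (Metric.diam (ψ '' Metric.closedBall y r) / r) ^ (1 / ((n : ℝ) - 1))
        ≤ C * (Φ (Metric.ball y (2 * r)) / (volume (Metric.ball y (2 * r))).toReal)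
              ^ ((p - q) / (p * q))
            * ((volume (ψ '' Metric.ball y (2 * r))).toReal
                / (volume (Metric.ball y (2 * r))).toReal) ^ (1 / ((n : ℝ) - 1) - 1/q)) :
    (∀ᵐ y ∂(volume.restrict Ω'),
      Filter.limsup
        (fun r : ℝ => ⨆ z ∈ Metric.sphere y r, edist (ψ y) (ψ z) / ENNReal.ofReal r)
        (nhdsWithin 0 (Set.Ioi 0)) < ⊤) ∧
    (∀ᵐ y ∂(volume.restrict Ω'), DifferentiableAt ℝ ψ y) := by
  have hinj : InjOn ψ Ω' := LeftInvOn.injOn hri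
  have hopen : ∀ U ⊆ Ω', IsOpen U → IsOpen (ψ '' U) := fun U hU hUo =>
    isOpen_image_of_leftInvOn hφ hΩ hmaps' hri hli hUo hU
  have hbdd : LocallyBoundedOnOpens (fun U => ENNReal.ofReal (Φ U)) Ω' := fun y hy =>
    ⟨ENNReal.ofReal M, ofReal_lt_top, (eventually_smallSets_subset.2 (hΩ'.mem_nhds hy)).mono
      fun U hU hUo => ENNReal.ofReal_le_ofReal (hbounded U hUo hU)⟩
  refine stmt_17_general volume volume finrank_euclideanSpace_fin finrank_euclideanSpace_fin
    hq.le hqp.le hΩ' hψ hinj hopen (.ofReal_of_hasSum hnonneg hadd) hbdd (C := C) fun y hy => ?_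
  filter_upwards [self_mem_nhdsWithin, (tendsto_mul_left_nhdsGT_zero two_pos).eventually
    ((eventually_ball_subset (hΩ'.mem_nhds hy)).filter_mono nhdsWithin_le_nhds)]
    with r (hr : 0 < r) hrΩ'
  rw [toReal_ofReal (hnonneg _ isOpen_ball hrΩ')]
  exact hdiam y r hr hrΩ'
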